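/- Define Q₂ : (0, ∞) → ℂ by Q₂(t) = (2π)^{−2} (4i)^{−1} ∫_ℝ sign(β) |β|^{−2} exp(2iβt) (exp(−(2/3)iβ³) − 1) dβ. Then: (a) the integrand is absolutely integrable on ℝ for every t, so Q₂(t) is a well-defined Lebesgue integral; (b) Q₂(t) is real for every t > 0; and (c) Q₂(t) = O(t^{−5/4}) as t → +∞. -/

import Mathlib

/-!
The integrand is `sign β · f(β)`, where `f(β) = β⁻² exp(2iβt) (exp(-(2/3)iβ³) - 1)` is
`O(min(|β|, β⁻²))`, hence integrable, and satisfies `f(-β) = conj f(β)`. The integral over `ℝ` is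
therefore `2i Im ∫₀^∞ f` (`integral_signed`), and the prefactor `(4i)⁻¹` makes `Q₂(t)` real.

For the decay, put `t = τ⁸`, so that the target is `∫₀^∞ f = O(τ⁻¹⁰)`. The half-line is cut at
`τ⁻⁵`, `τ` and `τ⁴ ± τ⁻²`, the full phase `2tβ - (2/3)β³` being stationary at `β = √t = τ⁴`.

* On `[0, τ⁻⁵]` the bound `|f(β)| ≤ β` is enough (`norm_integral_near_zero_le`).
* On `[τ⁻⁵, τ]` the difference of exponentials is kept together and two integrations by parts
  against `exp(2iβt)` are made (`norm_integral_low_le`).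
* On `[τ, ∞)` the two exponentials are treated separately. The linear phase needs one integration
  by parts (`norm_integral_linPhase_le`), and so does the full phase where `|β - τ⁴| ≥ τ⁻²`
  (`norm_integral_nonstationary_le`); near the stationary point the length `2τ⁻²` times the
  amplitude `O(τ⁻⁸)` gives `τ⁻¹⁰` (`norm_integral_stationary_le`). The cut at `τ` is what makes the
  boundary terms `1/(tβ²)` as small as `τ⁻¹⁰`.

All integrations by parts go through `norm_integral_le_of_approx_primitive`.
-/

open MeasureTheory Filter Asymptotics

/-- The short-loop correction kernel for the two-dimensional model operator
`h²D₁² + h²D₂² − x₁`: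
`Q₂(t) = (2π)^{−2} (4i)^{−1} ∫_ℝ sign β · |β|^{−2} exp(2iβt) (exp(−(2/3)iβ³) − 1) dβ`. -/
noncomputable def shortLoopQ₂ (t : ℝ) : ℂ :=
  ((((2*Real.pi) ^ 2)⁻¹ : ℝ) : ℂ) * (4 * Complex.I)⁻¹ *
    ∫ β : ℝ, (Real.sign β : ℂ) * (((|β| ^ 2)⁻¹ : ℝ) : ℂ) *
      Complex.exp (2 * Complex.I * (β : ℂ) * (t : ℂ)) *
      (Complex.exp (-(2/3) * Complex.I * (β : ℂ)^3) - 1)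

/-! ### Phase factors -/

open Complex in
/-- The cubic phase factor `exp(-(2/3) i β³)`. -/
noncomputable def cubicPhase (β : ℝ) : ℂ := exp (((-(2/3) * β ^ 3 : ℝ) : ℂ) * I)

open Complex in
/-- The linear phase factor `exp(2 i t β)`. -/
noncomputable def linPhase (t β : ℝ) : ℂ := exp (((2 * t * β : ℝ) : ℂ) * I)

/-- The integrand of `Q₂(t)` without its sign factor, defined for all real `β` but used mainly on
the half-line `β > 0`. At `β = 0` it takes the value `0`. -/
noncomputable def halfIntegrand (t β : ℝ) : ℂ :=
  ((β : ℂ) ^ 2)⁻¹ * linPhase t β * (cubicPhase β - 1)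

lemma norm_cubicPhase (β : ℝ) : ‖cubicPhase β‖ = 1 := Complex.norm_exp_ofReal_mul_I _

lemma norm_linPhase (t β : ℝ) : ‖linPhase t β‖ = 1 := Complex.norm_exp_ofReal_mul_I _

lemma continuous_cubicPhase : Continuous cubicPhase := by
  unfold cubicPhase; fun_prop

lemma continuous_linPhase (t : ℝ) : Continuous (linPhase t) := by
  unfold linPhase; fun_prop

lemma hasDerivAt_cubicPhase (β : ℝ) :
    HasDerivAt cubicPhase (-2 * Complex.I * (β : ℂ) ^ 2 * cubicPhase β) β := by
  have h1 : HasDerivAt (fun β : ℝ => -(2/3) * β ^ 3) (-2 * β ^ 2) β := by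
    refine ((hasDerivAt_pow 3 β).const_mul (-(2/3) : ℝ)).congr_deriv ?_
    push_cast; ring
  have h2 := (h1.ofReal_comp.mul_const Complex.I).cexp
  refine HasDerivAt.congr_deriv (f := cubicPhase) h2 ?_
  unfold cubicPhase; push_cast; ring

lemma hasDerivAt_linPhase (t β : ℝ) :
    HasDerivAt (linPhase t) (2 * Complex.I * t * linPhase t β) β := by
  have h1 : HasDerivAt (fun β : ℝ => 2 * t * β) (2 * t) β := by
    simpa using (hasDerivAt_id β).const_mul (2 * t)
  have h2 := (h1.ofReal_comp.mul_const Complex.I).cexp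
  refine HasDerivAt.congr_deriv (f := linPhase t) h2 ?_
  unfold linPhase; push_cast; ring

lemma norm_cubicPhase_sub_one_le (β : ℝ) : ‖cubicPhase β - 1‖ ≤ 2 / 3 * |β| ^ 3 := by
  have := Real.norm_exp_I_mul_ofReal_sub_one_le (x := -(2/3) * β ^ 3)
  rw [mul_comm] at this
  refine this.trans (le_of_eq ?_)
  rw [Real.norm_eq_abs, abs_mul, abs_pow]; norm_num

lemma norm_cubicPhase_sub_one_le_two (β : ℝ) : ‖cubicPhase β - 1‖ ≤ 2 := by
  refine (norm_sub_le _ _).trans ?_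
  rw [norm_cubicPhase]; norm_num

lemma hasDerivAt_inv_pow (n : ℕ) {β : ℝ} (hβ : β ≠ 0) :
    HasDerivAt (fun x : ℝ => ((x : ℂ) ^ n)⁻¹) (-n * ((β : ℂ) ^ (n + 1))⁻¹) β := by
  have hβ' : (β : ℂ) ≠ 0 := by exact_mod_cast hβ
  have h := ((hasDerivAt_id β).ofReal_comp.pow n).inv (pow_ne_zero n hβ')
  refine (h.congr_deriv ?_)
  rcases n with _ | n
  · simp
  · simp only [id, Nat.add_sub_cancel]
    simp only [Pi.pow_apply]
    push_cast
    field_simp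
    ring

/-! ### Integration by parts -/

/-- Integration by parts as an estimate: if `P` is an approximate primitive of `f`, with defect
`f - P'` dominated by `V'`, then the integral of `f` is controlled by the boundary values
of `P` and the increment of `V`. -/
lemma norm_integral_le_of_approx_primitive {f P P' : ℝ → ℂ} {V V' : ℝ → ℝ} {a b : ℝ}
    (hab : a ≤ b) (hm : Measurable f) (hf : ∀ x ∈ Set.Icc a b, ContinuousAt f x)
    (hP : ∀ x ∈ Set.Icc a b, HasDerivAt P (P' x) x)
    (hV : ∀ x ∈ Set.Icc a b, HasDerivAt V (V' x) x)
    (hb : ∀ x ∈ Set.Icc a b, ‖f x - P' x‖ ≤ V' x) :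
    ‖∫ x in a..b, f x‖ ≤ ‖P b‖ + ‖P a‖ + (V b - V a) := by
  have hd : ∀ x ∈ Set.Icc a b, HasDerivAt (fun y => (∫ z in a..y, f z) - (P y - P a))
      (f x - P' x) x := by
    intro x hx
    refine HasDerivAt.sub ?_ ((hP x hx).sub_const _)
    refine intervalIntegral.integral_hasDerivAt_right ?_
      (hm.stronglyMeasurable.stronglyMeasurableAtFilter) (hf x hx)
    apply ContinuousOn.intervalIntegrable
    rw [Set.uIcc_of_le hx.1]
    exact fun y hy => (hf y ⟨hy.1, hy.2.trans hx.2⟩).continuousWithinAt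
  have key := image_norm_le_of_norm_deriv_right_le_deriv_boundary'
    (f := fun y => (∫ z in a..y, f z) - (P y - P a)) (f' := fun x => f x - P' x)
    (a := a) (b := b) (B := fun y => V y - V a) (B' := V')
    (fun x hx => (hd x hx).continuousAt.continuousWithinAt)
    (fun x hx => (hd x ⟨hx.1, hx.2.le⟩).hasDerivWithinAt) (by simp)
    (fun x hx => ((hV x hx).sub_const _).continuousAt.continuousWithinAt)
    (fun x hx => ((hV x ⟨hx.1, hx.2.le⟩).sub_const _).hasDerivWithinAt)
    (fun x hx => hb x ⟨hx.1, hx.2.le⟩) (Set.right_mem_Icc.2 hab)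
  calc ‖∫ x in a..b, f x‖ = ‖((∫ z in a..b, f z) - (P b - P a)) + (P b - P a)‖ := by
        rw [sub_add_cancel]
    _ ≤ (V b - V a) + (‖P b‖ + ‖P a‖) :=
        (norm_add_le _ _).trans (add_le_add key (norm_sub_le _ _))
    _ = _ := by ring

/-! ### Integrability and symmetry of the integrand -/

lemma measurable_halfIntegrand (t : ℝ) : Measurable (halfIntegrand t) := by
  have h1 := (continuous_linPhase t).measurable
  have h2 := continuous_cubicPhase.measurable
  unfold halfIntegrand; fun_prop

lemma norm_halfIntegrand (t β : ℝ) :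
    ‖halfIntegrand t β‖ = (β ^ 2)⁻¹ * ‖cubicPhase β - 1‖ := by
  rw [halfIntegrand, norm_mul, norm_mul, norm_linPhase, norm_inv, norm_pow, Complex.norm_real,
    Real.norm_eq_abs, sq_abs, mul_one]

lemma norm_halfIntegrand_le_abs (t β : ℝ) : ‖halfIntegrand t β‖ ≤ 2 / 3 * |β| := by
  rw [norm_halfIntegrand]
  rcases eq_or_ne β 0 with rfl | hβ
  · simp
  have h := norm_cubicPhase_sub_one_le β
  rw [inv_mul_le_iff₀ (by positivity), ← sq_abs β]
  calc _ ≤ _ := h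
    _ = _ := by ring

lemma norm_halfIntegrand_le_inv (t β : ℝ) : ‖halfIntegrand t β‖ ≤ 2 * (β ^ 2)⁻¹ := by
  rw [norm_halfIntegrand, mul_comm]
  exact mul_le_mul_of_nonneg_right (norm_cubicPhase_sub_one_le_two β) (by positivity)

lemma integrable_halfIntegrand (t : ℝ) : Integrable (halfIntegrand t) := by
  refine (integrable_inv_one_add_sq.const_mul 4).mono'
    (measurable_halfIntegrand t).aestronglyMeasurable (ae_of_all _ fun β => ?_)
  rw [← div_eq_mul_inv, le_div_iff₀ (by positivity)]
  rcases le_total |β| 1 with h | h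
  · have h1 := norm_halfIntegrand_le_abs t β
    have h2 : β ^ 2 ≤ 1 := by rw [← sq_abs]; nlinarith [abs_nonneg β]
    nlinarith [norm_nonneg (halfIntegrand t β)]
  · have h1 := norm_halfIntegrand_le_inv t β
    have h2 : 1 ≤ β ^ 2 := by rw [← sq_abs]; nlinarith
    have h3 : (β ^ 2)⁻¹ * β ^ 2 = 1 := inv_mul_cancel₀ (by positivity)
    have h4 : (β ^ 2)⁻¹ ≤ 1 := inv_le_one_of_one_le₀ h2
    nlinarith

lemma integrand_eq (t β : ℝ) :
    (Real.sign β : ℂ) * (((|β| ^ 2)⁻¹ : ℝ) : ℂ) *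
      Complex.exp (2 * Complex.I * (β : ℂ) * (t : ℂ)) *
      (Complex.exp (-(2/3) * Complex.I * (β : ℂ)^3) - 1) =
    (Real.sign β : ℂ) * halfIntegrand t β := by
  rw [sq_abs, halfIntegrand, linPhase, cubicPhase]
  push_cast
  rw [show 2 * Complex.I * (β : ℂ) * (t : ℂ) = 2 * t * β * Complex.I by ring,
    show -(2/3) * Complex.I * (β : ℂ)^3 = -(2/3) * (β : ℂ)^3 * Complex.I by ring]
  ring

lemma halfIntegrand_neg (t β : ℝ) :
    halfIntegrand t (-β) = (starRingEnd ℂ) (halfIntegrand t β) := by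
  simp only [halfIntegrand, linPhase, cubicPhase, map_mul, map_sub, map_inv₀, map_pow,
    Complex.conj_ofReal, ← Complex.exp_conj, Complex.conj_I, map_one]
  push_cast
  ring_nf

lemma integral_signed (t : ℝ) :
    ∫ β : ℝ, (Real.sign β : ℂ) * halfIntegrand t β =
      (∫ β in Set.Ioi 0, halfIntegrand t β) -
        (starRingEnd ℂ) (∫ β in Set.Ioi 0, halfIntegrand t β) := by
  have hpos : Set.EqOn (fun β : ℝ => (Real.sign β : ℂ) * halfIntegrand t β) (halfIntegrand t)
      (Set.Ioi 0) := fun β hβ => by simp [Real.sign_of_pos hβ]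
  have hneg : Set.EqOn (fun β : ℝ => (Real.sign β : ℂ) * halfIntegrand t β)
      (fun β => -halfIntegrand t β) (Set.Iic 0) := fun β hβ => by
    rcases (Set.mem_Iic.1 hβ).lt_or_eq with h | rfl
    · simp [Real.sign_of_neg h]
    · simp [halfIntegrand]
  have hi := integrable_halfIntegrand t
  rw [← intervalIntegral.integral_Iic_add_Ioi (b := (0 : ℝ))
    (hi.neg.integrableOn.congr_fun hneg.symm measurableSet_Iic)
    (hi.integrableOn.congr_fun hpos.symm measurableSet_Ioi),
    setIntegral_congr_fun measurableSet_Iic hneg, setIntegral_congr_fun measurableSet_Ioi hpos,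
    integral_neg, ← integral_conj]
  simp_rw [← halfIntegrand_neg]
  rw [integral_comp_neg_Ioi, neg_zero]
  ring

/-! ### Oscillatory estimates -/

/-- On `[τ⁻⁵, τ]`, with `t = τ⁸`, two integrations by parts in the linear phase suffice: the
amplitude `h(β) = β⁻² (exp(-(2/3) i β³) - 1)` satisfies `h = O(min(β, β⁻²))`, `h' = O(1)` and
`h'' = O(β² + β⁻¹)`. -/
lemma norm_integral_low_le {τ : ℝ} (hτ : 1 ≤ τ) :
    ‖∫ β in (τ ^ 5)⁻¹..τ, halfIntegrand (τ ^ 8) β‖ ≤ 7 * (τ ^ 10)⁻¹ := by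
  have hτ0 : 0 < τ := by linarith
  have hτc : (τ : ℂ) ≠ 0 := by exact_mod_cast hτ0.ne'
  have ha0 : 0 < (τ ^ 5)⁻¹ := by positivity
  have ha1 : (τ ^ 5)⁻¹ ≤ 1 := inv_le_one_of_one_le₀ (one_le_pow₀ hτ)
  set E := linPhase (τ ^ 8) with hE
  set C := cubicPhase with hC
  set h : ℝ → ℂ := fun x => ((x : ℂ) ^ 2)⁻¹ * (C x - 1) with hh
  set h1 : ℝ → ℂ := fun x => -2 * Complex.I * C x - 2 * (((x : ℂ) ^ 3)⁻¹ * (C x - 1)) with hh1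
  set h2 : ℝ → ℂ := fun x => -4 * (x : ℂ) ^ 2 * C x + 4 * Complex.I * (x : ℂ)⁻¹ * C x
    + 6 * (((x : ℂ) ^ 4)⁻¹ * (C x - 1)) with hh2
  have dh : ∀ x : ℝ, x ≠ 0 → HasDerivAt h (h1 x) x := by
    intro x hx
    have hx' : (x : ℂ) ≠ 0 := by exact_mod_cast hx
    refine ((hasDerivAt_inv_pow 2 hx).mul
      ((hasDerivAt_cubicPhase x).sub_const 1)).congr_deriv ?_
    simp only [hh1, hC]
    push_cast
    field_simp
    ring
  have dh1 : ∀ x : ℝ, x ≠ 0 → HasDerivAt h1 (h2 x) x := by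
    intro x hx
    have hx' : (x : ℂ) ≠ 0 := by exact_mod_cast hx
    refine (((hasDerivAt_cubicPhase x).const_mul (-2 * Complex.I)).sub
      (((hasDerivAt_inv_pow 3 hx).mul
      ((hasDerivAt_cubicPhase x).sub_const 1)).const_mul 2)).congr_deriv ?_
    simp only [hh2, hC]
    push_cast
    field_simp
    ring_nf
    simp only [Complex.I_sq]
    ring
  have nh : ∀ x, ‖h x‖ = (x ^ 2)⁻¹ * ‖C x - 1‖ := fun x => by
    simp only [hh, norm_mul, norm_inv, norm_pow, Complex.norm_real, Real.norm_eq_abs, sq_abs]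
  have nh_two : ∀ x, ‖h x‖ ≤ 2 * (x ^ 2)⁻¹ := fun x => by
    rw [nh, ← norm_halfIntegrand 0]; exact norm_halfIntegrand_le_inv 0 x
  have nh_abs : ∀ x, ‖h x‖ ≤ 2 / 3 * |x| := fun x => by
    rw [nh, ← norm_halfIntegrand 0]; exact norm_halfIntegrand_le_abs 0 x
  have nC : ∀ x, ‖C x‖ = 1 := norm_cubicPhase
  have nh1 : ∀ x : ℝ, 0 < x → ‖h1 x‖ ≤ 4 := by
    intro x hx
    have hc := norm_cubicPhase_sub_one_le x
    rw [abs_of_pos hx] at hc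
    have hc' : (x ^ 3)⁻¹ * ‖C x - 1‖ ≤ 2 / 3 := by
      rw [inv_mul_le_iff₀ (by positivity)]; linarith
    calc ‖h1 x‖ ≤ _ := norm_sub_le _ _
      _ = 2 + 2 * ((x ^ 3)⁻¹ * ‖C x - 1‖) := by
        simp [nC, abs_of_pos hx]
      _ ≤ 4 := by linarith
  have nh2 : ∀ x : ℝ, 0 < x → ‖h2 x‖ ≤ 4 * x ^ 2 + 8 * x⁻¹ := by
    intro x hx
    have hc := norm_cubicPhase_sub_one_le x
    rw [abs_of_pos hx] at hc
    have hc' : (x ^ 4)⁻¹ * ‖C x - 1‖ ≤ 2 / 3 * x⁻¹ := by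
      rw [inv_mul_le_iff₀ (by positivity)]
      refine hc.trans (le_of_eq ?_)
      field_simp
    calc ‖h2 x‖ ≤ _ := norm_add₃_le
      _ = 4 * x ^ 2 + 4 * x⁻¹ + 6 * ((x ^ 4)⁻¹ * ‖C x - 1‖) := by
        simp [nC, abs_of_pos hx]
      _ ≤ _ := by linarith
  -- With `t = τ⁸`, `P' = h E + h'' E / (4t²)`: the two `h'` terms cancel.
  set P : ℝ → ℂ := fun x => E x * (h x / (2 * Complex.I * τ ^ 8) + h1 x / (4 * τ ^ 16)) with hP
  have nP : ∀ x : ℝ, 0 < x → ‖P x‖ ≤ ‖h x‖ / (2 * τ ^ 8) + 1 / τ ^ 16 := by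
    intro x hx
    rw [hP]
    simp only
    rw [norm_mul, hE, norm_linPhase, one_mul]
    refine (norm_add_le _ _).trans ?_
    simp only [norm_div, norm_mul, norm_pow, Complex.norm_real, Real.norm_eq_abs,
      abs_of_pos hτ0, Complex.norm_I, Complex.norm_ofNat, mul_one]
    refine add_le_add le_rfl ?_
    calc ‖h1 x‖ / (4 * τ ^ 16) ≤ 4 / (4 * τ ^ 16) := by gcongr; exact nh1 x hx
      _ = _ := by field_simp
  have main := norm_integral_le_of_approx_primitive (f := halfIntegrand (τ ^ 8)) (P := P)
    (P' := fun x => halfIntegrand (τ ^ 8) x + E x * (h2 x / (4 * τ ^ 16)))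
    (V := fun x => x * ((4 * τ ^ 2 + 8 * τ ^ 5) / (4 * τ ^ 16)))
    (V' := fun _ => (4 * τ ^ 2 + 8 * τ ^ 5) / (4 * τ ^ 16))
    (ha1.trans hτ) (measurable_halfIntegrand _) ?_ ?_ ?_ ?_
  · have p1 : ‖P τ‖ ≤ 2 * (τ ^ 10)⁻¹ := by
      refine (nP τ hτ0).trans ?_
      have e1 : ‖h τ‖ / (2 * τ ^ 8) ≤ (τ ^ 10)⁻¹ := by
        rw [div_le_iff₀ (by positivity)]
        refine (nh_two τ).trans (le_of_eq ?_)
        field_simp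
      have e2 : 1 / τ ^ 16 ≤ (τ ^ 10)⁻¹ := by
        rw [one_div]; gcongr <;> norm_num [hτ]
      linarith
    have p2 : ‖P (τ ^ 5)⁻¹‖ ≤ 2 * (τ ^ 10)⁻¹ := by
      refine (nP _ ha0).trans ?_
      have e1 : ‖h (τ ^ 5)⁻¹‖ / (2 * τ ^ 8) ≤ (τ ^ 10)⁻¹ := by
        have := nh_abs (τ ^ 5)⁻¹
        rw [abs_of_pos ha0] at this
        calc _ ≤ (2 * (τ ^ 5)⁻¹) / (2 * τ ^ 8) := by gcongr; linarith
          _ = (τ ^ 13)⁻¹ := by field_simp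
          _ ≤ _ := by gcongr <;> norm_num [hτ]
      have e2 : 1 / τ ^ 16 ≤ (τ ^ 10)⁻¹ := by
        rw [one_div]; gcongr <;> norm_num [hτ]
      linarith
    have p3 : τ * ((4 * τ ^ 2 + 8 * τ ^ 5) / (4 * τ ^ 16)) ≤ 3 * (τ ^ 10)⁻¹ := by
      have : τ ^ 2 ≤ τ ^ 5 := pow_le_pow_right₀ hτ (by norm_num)
      calc _ ≤ τ * ((4 * τ ^ 5 + 8 * τ ^ 5) / (4 * τ ^ 16)) := by gcongr
        _ = _ := by field_simp; norm_num
    have p4 : 0 ≤ (τ ^ 5)⁻¹ * ((4 * τ ^ 2 + 8 * τ ^ 5) / (4 * τ ^ 16)) := by positivity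
    linarith
  · intro x hx
    have hx0 : x ≠ 0 := (ha0.trans_le hx.1).ne'
    have : halfIntegrand (τ ^ 8) = fun x => E x * h x := by
      ext y; simp only [halfIntegrand, hh, hE, hC]; ring
    rw [this]
    exact (hasDerivAt_linPhase _ _).continuousAt.mul (dh x hx0).continuousAt
  · intro x hx
    have hx0 : x ≠ 0 := (ha0.trans_le hx.1).ne'
    refine ((hasDerivAt_linPhase (τ ^ 8) x).mul (((dh x hx0).div_const _).add
      ((dh1 x hx0).div_const _))).congr_deriv ?_
    have : halfIntegrand (τ ^ 8) x = E x * h x := by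
      simp only [halfIntegrand, hh, hE, hC]; ring
    rw [this, ← hE]
    push_cast
    simp only [Pi.add_apply]
    field_simp
    ring_nf
    simp only [Complex.I_sq]
    ring
  · intro x hx
    simpa using (hasDerivAt_id x).mul_const ((4 * τ ^ 2 + 8 * τ ^ 5) / (4 * τ ^ 16))
  · intro x hx
    have hx0 : 0 < x := ha0.trans_le hx.1
    have hxi : x⁻¹ ≤ τ ^ 5 := inv_le_of_inv_le₀ (by positivity) hx.1
    have hx2 : x ^ 2 ≤ τ ^ 2 := by gcongr; exact hx.2
    rw [sub_add_cancel_left, norm_neg, norm_mul, hE, norm_linPhase, one_mul]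
    simp only [norm_div, norm_mul, norm_pow, Complex.norm_real, Real.norm_eq_abs,
      abs_of_pos hτ0, Complex.norm_ofNat]
    gcongr
    linarith [nh2 x hx0]

/-- The full phase `exp(i(2tβ - (2/3)β³))`, `t = τ⁸`, away from its stationary point `β = τ⁴`.
The primitive comes from `1/(β²·2(t - β²)) = (1/(2t)) (1/β² + 1/(t - β²))`, each summand of
which is monotone on the interval. -/
lemma norm_integral_nonstationary_le {τ a c : ℝ} (hτ : 1 ≤ τ) (ha : τ ≤ a) (hac : a ≤ c)
    (hs : ∀ x ∈ Set.Icc a c, τ ^ 2 ≤ |τ ^ 8 - x ^ 2|) :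
    ‖∫ x in a..c, ((x : ℂ) ^ 2)⁻¹ * (linPhase (τ ^ 8) x * cubicPhase x)‖
      ≤ 4 * (τ ^ 10)⁻¹ := by
  have hτ0 : 0 < τ := by linarith
  have hτc : (τ : ℂ) ≠ 0 := by exact_mod_cast hτ0.ne'
  set Φ : ℝ → ℂ := fun x => linPhase (τ ^ 8) x * cubicPhase x with hΦ
  have nΦ : ∀ x, ‖Φ x‖ = 1 := fun x => by
    simp only [hΦ, norm_mul, norm_linPhase, norm_cubicPhase, mul_one]
  have dΦ : ∀ x : ℝ, HasDerivAt Φ (2 * Complex.I * (τ ^ 8 - x ^ 2) * Φ x) x := fun x => by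
    refine ((hasDerivAt_linPhase _ x).mul (hasDerivAt_cubicPhase x)).congr_deriv ?_
    simp only [hΦ]; push_cast; ring
  have hx0 : ∀ x ∈ Set.Icc a c, 0 < x := fun x hx => by linarith [hx.1]
  have hne : ∀ x ∈ Set.Icc a c, τ ^ 8 - x ^ 2 ≠ 0 := fun x hx h0 => by
    have := hs x hx
    rw [h0, abs_zero] at this
    have : 0 < τ ^ 2 := by positivity
    linarith
  have d1 : ∀ x ∈ Set.Icc a c, HasDerivAt (fun y : ℝ => (y ^ 2)⁻¹) (-(2 * (x ^ 3)⁻¹)) x := by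
    intro x hx
    have := (hx0 x hx).ne'
    refine ((hasDerivAt_pow 2 x).inv (pow_ne_zero 2 this)).congr_deriv ?_
    push_cast; field_simp
  have d2 : ∀ x ∈ Set.Icc a c, HasDerivAt (fun y : ℝ => (τ ^ 8 - y ^ 2)⁻¹)
      (2 * x * ((τ ^ 8 - x ^ 2) ^ 2)⁻¹) x := by
    intro x hx
    refine (((hasDerivAt_pow 2 x).const_sub (τ ^ 8)).inv (hne x hx)).congr_deriv ?_
    push_cast; field_simp
  have b1 : ∀ x ∈ Set.Icc a c, |(x ^ 2)⁻¹| ≤ (τ ^ 2)⁻¹ := fun x hx => by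
    have := ha.trans hx.1
    rw [abs_of_nonneg (by positivity)]
    gcongr
  have b2 : ∀ x ∈ Set.Icc a c, |(τ ^ 8 - x ^ 2)⁻¹| ≤ (τ ^ 2)⁻¹ := fun x hx => by
    rw [abs_inv]
    exact inv_anti₀ (by positivity) (hs x hx)
  set G : ℝ → ℝ := fun x => (2 * τ ^ 8)⁻¹ * ((x ^ 2)⁻¹ + (τ ^ 8 - x ^ 2)⁻¹) with hG
  set V : ℝ → ℝ := fun x => (2 * τ ^ 8)⁻¹ * (-(x ^ 2)⁻¹ + (τ ^ 8 - x ^ 2)⁻¹) with hV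
  have e10 : (2 * τ ^ 8)⁻¹ * ((τ ^ 2)⁻¹ + (τ ^ 2)⁻¹) = (τ ^ 10)⁻¹ := by
    field_simp; norm_num
  have bG : ∀ x ∈ Set.Icc a c, |G x| ≤ (τ ^ 10)⁻¹ := fun x hx => by
    rw [← e10, hG]
    simp only
    rw [abs_mul, abs_of_pos (a := (2 * τ ^ 8)⁻¹) (by positivity)]
    gcongr
    exact (abs_add_le _ _).trans (add_le_add (b1 x hx) (b2 x hx))
  have bV : ∀ x ∈ Set.Icc a c, |V x| ≤ (τ ^ 10)⁻¹ := fun x hx => by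
    rw [← e10, hV]
    simp only
    rw [abs_mul, abs_of_pos (a := (2 * τ ^ 8)⁻¹) (by positivity)]
    gcongr
    refine (abs_add_le _ _).trans (add_le_add ?_ (b2 x hx))
    rw [abs_neg]; exact b1 x hx
  set G' : ℝ → ℝ := fun x => (2 * τ ^ 8)⁻¹ * (-(2 * (x ^ 3)⁻¹) +
    2 * x * ((τ ^ 8 - x ^ 2) ^ 2)⁻¹) with hG'
  have dG : ∀ x ∈ Set.Icc a c, HasDerivAt G (G' x) x := fun x hx =>
    ((d1 x hx).add (d2 x hx)).const_mul _
  have nP : ∀ x, ‖(G x : ℂ) * (Φ x * -Complex.I)‖ = |G x| := fun x => by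
    simp [nΦ]
  have main := norm_integral_le_of_approx_primitive
    (f := fun x : ℝ => ((x : ℂ) ^ 2)⁻¹ * Φ x)
    (P := fun x => (G x : ℂ) * (Φ x * -Complex.I))
    (P' := fun x => ((x : ℂ) ^ 2)⁻¹ * Φ x + (G' x : ℂ) * (Φ x * -Complex.I))
    (V := V)
    (V' := fun x => (2 * τ ^ 8)⁻¹ * (-(-(2 * (x ^ 3)⁻¹)) +
      2 * x * ((τ ^ 8 - x ^ 2) ^ 2)⁻¹))
    hac ?_ ?_ ?_ ?_ ?_
  · rw [nP, nP] at main
    have := bG a ⟨le_rfl, hac⟩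
    have := bG c ⟨hac, le_rfl⟩
    have := (abs_le.1 (bV a ⟨le_rfl, hac⟩)).1
    have := (abs_le.1 (bV c ⟨hac, le_rfl⟩)).2
    linarith
  · have h1 := (continuous_linPhase (τ ^ 8)).measurable
    have h2 := continuous_cubicPhase.measurable
    simp only [hΦ]; fun_prop
  · intro x hx
    exact (hasDerivAt_inv_pow 2 (hx0 x hx).ne').continuousAt.mul (dΦ x).continuousAt
  · intro x hx
    refine ((dG x hx).ofReal_comp.mul ((dΦ x).mul_const (-Complex.I))).congr_deriv ?_
    have hxc : (x : ℂ) ≠ 0 := by exact_mod_cast (hx0 x hx).ne'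
    have hd : ((τ : ℂ) ^ 8 - (x : ℂ) ^ 2) ≠ 0 := by exact_mod_cast hne x hx
    have key : (G x : ℂ) * (2 * ((τ : ℂ) ^ 8 - (x : ℂ) ^ 2)) = ((x : ℂ) ^ 2)⁻¹ := by
      simp only [hG]; push_cast; field_simp; ring
    rw [← key]
    linear_combination (-(G x : ℂ) * (2 * ((τ : ℂ) ^ 8 - (x : ℂ) ^ 2)) * Φ x) * Complex.I_sq
  · intro x hx
    exact ((d1 x hx).neg.add (d2 x hx)).const_mul _
  · intro x hx
    have := hx0 x hx
    rw [sub_add_cancel_left, norm_neg, norm_mul, norm_mul, nΦ, norm_neg, Complex.norm_I,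
      Complex.norm_real, Real.norm_eq_abs, one_mul, mul_one, hG']
    simp only
    rw [abs_mul, abs_of_pos (a := (2 * τ ^ 8)⁻¹) (by positivity)]
    gcongr
    refine (abs_add_le _ _).trans (add_le_add ?_ ?_)
    · rw [abs_neg, neg_neg, abs_of_pos (by positivity)]
    · rw [abs_of_nonneg (by positivity)]

/-- The purely linear phase has no stationary point, so one integration by parts suffices. -/
lemma norm_integral_linPhase_le {τ R : ℝ} (hτ : 1 ≤ τ) (hR : τ ≤ R) :
    ‖∫ x in τ..R, ((x : ℂ) ^ 2)⁻¹ * linPhase (τ ^ 8) x‖ ≤ 4 * (τ ^ 10)⁻¹ := by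
  have hτ0 : 0 < τ := by linarith
  have hτc : (τ : ℂ) ≠ 0 := by exact_mod_cast hτ0.ne'
  have hx0 : ∀ x ∈ Set.Icc τ R, 0 < x := fun x hx => by linarith [hx.1]
  have b1 : ∀ x ∈ Set.Icc τ R, (2 * τ ^ 8)⁻¹ * (x ^ 2)⁻¹ ≤ (τ ^ 10)⁻¹ := fun x hx => by
    have := hx.1
    calc _ ≤ (τ ^ 8)⁻¹ * (τ ^ 2)⁻¹ := by gcongr; linarith [pow_pos hτ0 8]
      _ = _ := by field_simp
  have nP : ∀ x : ℝ, ‖((x : ℂ) ^ 2)⁻¹ * (linPhase (τ ^ 8) x / (2 * Complex.I * τ ^ 8))‖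
      = (2 * τ ^ 8)⁻¹ * (x ^ 2)⁻¹ := fun x => by
    simp [norm_linPhase, abs_of_pos hτ0]
    ring
  have main := norm_integral_le_of_approx_primitive
    (f := fun x : ℝ => ((x : ℂ) ^ 2)⁻¹ * linPhase (τ ^ 8) x)
    (P := fun x => ((x : ℂ) ^ 2)⁻¹ * (linPhase (τ ^ 8) x / (2 * Complex.I * τ ^ 8)))
    (P' := fun x => ((x : ℂ) ^ 2)⁻¹ * linPhase (τ ^ 8) x +
      -2 * ((x : ℂ) ^ 3)⁻¹ * (linPhase (τ ^ 8) x / (2 * Complex.I * τ ^ 8)))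
    (V := fun x => (2 * τ ^ 8)⁻¹ * (-(x ^ 2)⁻¹))
    (V' := fun x => (2 * τ ^ 8)⁻¹ * (-(-(2 * (x ^ 3)⁻¹))))
    hR ?_ ?_ ?_ ?_ ?_
  · rw [nP, nP] at main
    have := b1 τ ⟨le_rfl, hR⟩
    have := b1 R ⟨hR, le_rfl⟩
    have : 0 ≤ (2 * τ ^ 8)⁻¹ * (R ^ 2)⁻¹ := by positivity
    linarith
  · have h1 := (continuous_linPhase (τ ^ 8)).measurable
    fun_prop
  · intro x hx
    exact (hasDerivAt_inv_pow 2 (hx0 x hx).ne').continuousAt.mul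
      (continuous_linPhase _).continuousAt
  · intro x hx
    have hxc : (x : ℂ) ≠ 0 := by exact_mod_cast (hx0 x hx).ne'
    refine ((hasDerivAt_inv_pow 2 (hx0 x hx).ne').mul
      ((hasDerivAt_linPhase (τ ^ 8) x).div_const _)).congr_deriv ?_
    push_cast
    field_simp
    ring
  · intro x hx
    have := (hx0 x hx).ne'
    refine (HasDerivAt.congr_deriv (f := fun y : ℝ => (y ^ 2)⁻¹)
      ((hasDerivAt_pow 2 x).inv (pow_ne_zero 2 this)) ?_).neg.const_mul _
    push_cast; field_simp
  · intro x hx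
    have := hx0 x hx
    rw [sub_add_cancel_left, norm_neg]
    simp [norm_linPhase, abs_of_pos hτ0, abs_of_pos this]
    apply le_of_eq
    ring

/-- The interval of width `2τ⁻²` around the stationary point `τ⁴` is estimated trivially. -/
lemma norm_integral_stationary_le {τ : ℝ} (hτ : 2 ≤ τ) :
    ‖∫ x in (τ ^ 4 - (τ ^ 2)⁻¹)..(τ ^ 4 + (τ ^ 2)⁻¹),
      ((x : ℂ) ^ 2)⁻¹ * (linPhase (τ ^ 8) x * cubicPhase x)‖ ≤ 8 * (τ ^ 10)⁻¹ := by
  have hτ0 : 0 < τ := by linarith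
  have hi : 0 < (τ ^ 2)⁻¹ := by positivity
  have hi1 : (τ ^ 2)⁻¹ ≤ 1 := inv_le_one_of_one_le₀ (one_le_pow₀ (by linarith))
  have h4 : 16 ≤ τ ^ 4 := by
    calc (16 : ℝ) = 2 ^ 4 := by norm_num
      _ ≤ _ := by gcongr
  refine (intervalIntegral.norm_integral_le_of_norm_le_const (C := 4 * (τ ^ 8)⁻¹) ?_).trans
    (le_of_eq ?_)
  · intro x hx
    rw [Set.uIoc_of_le (by linarith)] at hx
    have hx1 : τ ^ 4 / 2 ≤ x := by linarith [hx.1]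
    have hx0 : 0 < x := by linarith
    rw [norm_mul, norm_mul, norm_linPhase, norm_cubicPhase, norm_inv, norm_pow,
      Complex.norm_real, Real.norm_eq_abs, sq_abs, mul_one, mul_one]
    calc (x ^ 2)⁻¹ ≤ ((τ ^ 4 / 2) ^ 2)⁻¹ := by gcongr
      _ = _ := by field_simp; norm_num
  · rw [show τ ^ 4 + (τ ^ 2)⁻¹ - (τ ^ 4 - (τ ^ 2)⁻¹) = 2 * (τ ^ 2)⁻¹ by ring,
      abs_of_pos (by positivity)]
    field_simp
    norm_num

lemma norm_integral_near_zero_le {τ : ℝ} (hτ : 1 ≤ τ) :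
    ‖∫ β in (0 : ℝ)..(τ ^ 5)⁻¹, halfIntegrand (τ ^ 8) β‖ ≤ (τ ^ 10)⁻¹ := by
  have hτ0 : 0 < τ := by linarith
  have ha0 : 0 < (τ ^ 5)⁻¹ := by positivity
  refine (intervalIntegral.norm_integral_le_of_norm_le_const (C := (τ ^ 5)⁻¹) ?_).trans
    (le_of_eq ?_)
  · intro x hx
    rw [Set.uIoc_of_le ha0.le] at hx
    refine (norm_halfIntegrand_le_abs _ x).trans ?_
    rw [abs_of_pos hx.1]
    linarith [hx.1, hx.2]
  · rw [sub_zero, abs_of_pos ha0]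
    field_simp

/-! ### Decay of the half-line integral -/

lemma norm_integral_halfIntegrand_le {τ R : ℝ} (hτ : 2 ≤ τ) (hR : τ ^ 4 + 1 ≤ R) :
    ‖∫ β in (0 : ℝ)..R, halfIntegrand (τ ^ 8) β‖ ≤ 28 * (τ ^ 10)⁻¹ := by
  have hτ1 : 1 ≤ τ := by linarith
  have hτ0 : 0 < τ := by linarith
  have hi : 0 < (τ ^ 2)⁻¹ := by positivity
  have hi1 : (τ ^ 2)⁻¹ ≤ 1 := inv_le_one_of_one_le₀ (one_le_pow₀ hτ1)
  have him : τ ^ 4 * (τ ^ 2)⁻¹ = τ ^ 2 := by field_simp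
  have hτ2 : 4 ≤ τ ^ 2 := by nlinarith
  have h4 : τ + 1 ≤ τ ^ 4 := by nlinarith
  set Ψ : ℝ → ℂ := fun x => ((x : ℂ) ^ 2)⁻¹ * (linPhase (τ ^ 8) x * cubicPhase x) with hΨ
  have ii : ∀ a b, IntervalIntegrable (halfIntegrand (τ ^ 8)) volume a b := fun a b =>
    (integrable_halfIntegrand _).intervalIntegrable
  have icont : ∀ a b, τ ≤ a → τ ≤ b →
      ∀ x ∈ Set.uIcc a b, ContinuousAt (fun x : ℝ => ((x : ℂ) ^ 2)⁻¹) x := by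
    intro a b ha hb x hx
    have : τ ≤ x := (le_min ha hb).trans hx.1
    exact (hasDerivAt_inv_pow 2 (hτ0.trans_le this).ne').continuousAt
  have iΨ : ∀ a b, τ ≤ a → τ ≤ b → IntervalIntegrable Ψ volume a b := fun a b ha hb =>
    ContinuousOn.intervalIntegrable fun x hx => ((icont a b ha hb x hx).mul
      ((continuous_linPhase _).mul continuous_cubicPhase).continuousAt).continuousWithinAt
  have iE : IntervalIntegrable (fun x : ℝ => ((x : ℂ) ^ 2)⁻¹ * linPhase (τ ^ 8) x)
      volume τ R :=
    ContinuousOn.intervalIntegrable fun x hx => ((icont τ R le_rfl (by linarith) x hx).mul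
      (continuous_linPhase _).continuousAt).continuousWithinAt
  have split1 : ∫ β in (0 : ℝ)..R, halfIntegrand (τ ^ 8) β =
      (∫ β in (0 : ℝ)..(τ ^ 5)⁻¹, halfIntegrand (τ ^ 8) β) +
      (∫ β in (τ ^ 5)⁻¹..τ, halfIntegrand (τ ^ 8) β) +
      ∫ β in τ..R, halfIntegrand (τ ^ 8) β := by
    rw [intervalIntegral.integral_add_adjacent_intervals (ii _ _) (ii _ _),
      intervalIntegral.integral_add_adjacent_intervals (ii _ _) (ii _ _)]
  have split2 : ∫ β in τ..R, halfIntegrand (τ ^ 8) β =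
      (∫ x in τ..R, Ψ x) - ∫ x in τ..R, ((x : ℂ) ^ 2)⁻¹ * linPhase (τ ^ 8) x := by
    rw [← intervalIntegral.integral_sub (iΨ _ _ le_rfl (by linarith)) iE]
    congr 1
    ext x
    simp only [halfIntegrand, hΨ]
    ring
  have split3 : ∫ x in τ..R, Ψ x = (∫ x in τ..(τ ^ 4 - (τ ^ 2)⁻¹), Ψ x) +
      (∫ x in (τ ^ 4 - (τ ^ 2)⁻¹)..(τ ^ 4 + (τ ^ 2)⁻¹), Ψ x) +
      ∫ x in (τ ^ 4 + (τ ^ 2)⁻¹)..R, Ψ x := by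
    rw [intervalIntegral.integral_add_adjacent_intervals (iΨ _ _ le_rfl (by linarith))
        (iΨ _ _ (by linarith) (by linarith)),
      intervalIntegral.integral_add_adjacent_intervals (iΨ _ _ le_rfl (by linarith))
        (iΨ _ _ (by linarith) (by linarith))]
  have n1 := norm_integral_near_zero_le hτ1
  have n2 := norm_integral_low_le hτ1
  have n3 := norm_integral_linPhase_le hτ1 (show τ ≤ R by linarith)
  have n4 := norm_integral_stationary_le hτ
  have n5 := norm_integral_nonstationary_le (a := τ) (c := τ ^ 4 - (τ ^ 2)⁻¹) hτ1 le_rfl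
    (by linarith) (by
      intro x hx
      refine le_trans ?_ (le_abs_self _)
      have h1 : x ^ 2 ≤ (τ ^ 4 - (τ ^ 2)⁻¹) ^ 2 := by
        have hx0 : 0 ≤ x := hτ0.le.trans hx.1
        have hx1 := hx.2
        gcongr
      nlinarith)
  have n6 := norm_integral_nonstationary_le (a := τ ^ 4 + (τ ^ 2)⁻¹) (c := R) hτ1
    (by linarith) (by linarith) (by
      intro x hx
      refine le_trans ?_ (neg_le_abs _)
      have h1 : (τ ^ 4 + (τ ^ 2)⁻¹) ^ 2 ≤ x ^ 2 := by
        gcongr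
        exact hx.1
      nlinarith)
  rw [split1, split2, split3]
  refine (norm_add_le _ _).trans ?_
  have m1 := norm_add_le (∫ β in (0 : ℝ)..(τ ^ 5)⁻¹, halfIntegrand (τ ^ 8) β)
    (∫ β in (τ ^ 5)⁻¹..τ, halfIntegrand (τ ^ 8) β)
  have m2 := norm_sub_le ((∫ x in τ..(τ ^ 4 - (τ ^ 2)⁻¹), Ψ x) +
      (∫ x in (τ ^ 4 - (τ ^ 2)⁻¹)..(τ ^ 4 + (τ ^ 2)⁻¹), Ψ x) +
      ∫ x in (τ ^ 4 + (τ ^ 2)⁻¹)..R, Ψ x)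
      (∫ x in τ..R, ((x : ℂ) ^ 2)⁻¹ * linPhase (τ ^ 8) x)
  have m3 := norm_add₃_le (a := ∫ x in τ..(τ ^ 4 - (τ ^ 2)⁻¹), Ψ x)
      (b := ∫ x in (τ ^ 4 - (τ ^ 2)⁻¹)..(τ ^ 4 + (τ ^ 2)⁻¹), Ψ x)
      (c := ∫ x in (τ ^ 4 + (τ ^ 2)⁻¹)..R, Ψ x)
  linarith

lemma norm_integral_Ioi_le {τ : ℝ} (hτ : 2 ≤ τ) :
    ‖∫ β in Set.Ioi 0, halfIntegrand (τ ^ 8) β‖ ≤ 28 * (τ ^ 10)⁻¹ := by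
  have h := intervalIntegral_tendsto_integral_Ioi 0
    (integrable_halfIntegrand (τ ^ 8)).integrableOn tendsto_id
  refine le_of_tendsto h.norm ?_
  filter_upwards [eventually_ge_atTop (τ ^ 4 + 1)] with R hR
  exact norm_integral_halfIntegrand_le hτ hR

lemma shortLoopQ₂_eq (t : ℝ) :
    shortLoopQ₂ t = (((((2*Real.pi) ^ 2)⁻¹ / 2) *
      (∫ β in Set.Ioi 0, halfIntegrand t β).im : ℝ) : ℂ) := by
  unfold shortLoopQ₂
  simp_rw [integrand_eq]
  rw [integral_signed, Complex.sub_conj]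
  push_cast
  field_simp
  norm_num

/-- (a) the integrand defining `Q₂(t)` is absolutely integrable for every `t > 0`;
(b) `Q₂(t)` is real for every `t > 0`; (c) `Q₂(t) = O(t^{−5/4})` as `t → +∞`. -/
theorem shortLoopQ₂_properties :
    (∀ t : ℝ, 0 < t → Integrable (fun β : ℝ =>
        (Real.sign β : ℂ) * (((|β| ^ 2)⁻¹ : ℝ) : ℂ) *
          Complex.exp (2 * Complex.I * (β : ℂ) * (t : ℂ)) *
          (Complex.exp (-(2/3) * Complex.I * (β : ℂ)^3) - 1)))
    ∧ (∀ t : ℝ, 0 < t → (shortLoopQ₂ t).im = 0)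
    ∧ shortLoopQ₂ =O[atTop] fun t : ℝ => t ^ (-(5:ℝ)/4) := by
  refine ⟨fun t _ => ?_, fun t _ => ?_, ?_⟩
  · simp_rw [integrand_eq]
    have hs : Measurable Real.sign := by
      unfold Real.sign
      exact Measurable.ite measurableSet_Iio measurable_const
        (Measurable.ite measurableSet_Ioi measurable_const measurable_const)
    refine (integrable_halfIntegrand t).bdd_mul (c := 1)
      (Complex.measurable_ofReal.comp hs).aestronglyMeasurable (ae_of_all _ fun β => ?_)
    rcases Real.sign_apply_eq β with h | h | h <;> simp [h]
  · rw [shortLoopQ₂_eq, Complex.ofReal_im]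
  · refine IsBigO.of_bound (((2*Real.pi) ^ 2)⁻¹ / 2 * 28) ?_
    filter_upwards [eventually_ge_atTop ((2 : ℝ) ^ 8)] with t ht
    have ht0 : 0 < t := lt_of_lt_of_le (by norm_num) ht
    set τ := t ^ ((1 : ℝ) / 8) with hτ
    have hτt : τ ^ 8 = t := by
      rw [hτ, ← Real.rpow_natCast, ← Real.rpow_mul ht0.le]; norm_num
    have hτ0 : 0 ≤ τ := by positivity
    have hτ2 : 2 ≤ τ := by
      rw [← hτt] at ht
      exact le_of_pow_le_pow_left₀ (by norm_num) hτ0 ht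
    have hp : t ^ (-(5:ℝ)/4) = (τ ^ 10)⁻¹ := by
      rw [hτ, ← Real.rpow_natCast, ← Real.rpow_mul ht0.le, ← Real.rpow_neg ht0.le]; norm_num
    rw [shortLoopQ₂_eq, hp, Complex.norm_real, norm_mul,
      Real.norm_of_nonneg (r := ((2*Real.pi) ^ 2)⁻¹ / 2) (by positivity),
      Real.norm_of_nonneg (r := (τ ^ 10)⁻¹) (by positivity), mul_assoc]
    gcongr
    rw [Real.norm_eq_abs, ← hτt]
    exact (Complex.abs_im_le_norm _).trans (norm_integral_Ioi_le hτ2)
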